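/- Let K be an abelian group, m a positive integer, and R a commutative ring graded by K ⊕ ℤ^m, without (K ⊕ ℤ^m)-homogeneous zero divisors, and K-noetherian with respect to the coarsened K-grading (whose component of degree w ∈ K is the sum of all R_{(w,v)} over v ∈ ℤ^m). Then R is factorially (K ⊕ ℤ^m)-graded if and only if R is factorially K-graded. Moreover, in this case every (K ⊕ ℤ^m)-homogeneous element has one and the same decomposition into prime factors with respect to both gradings: any decomposition of a (K ⊕ ℤ^m)-homogeneous element into (K ⊕ ℤ^m)-prime factors is a decomposition into K-prime factors. -/

import Mathlib

/-!
The passage from `K ⊕ ℤᵐ` to `K` is made one coordinate of `ℤᵐ` at a time. A single step is set up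
for a `G`-grading (the fine grading) coarsened along `φ : G →+ H`, where some `ψ : G →+ ℤ` together
with `φ` separates the points of `G`. A nonzero coarsely homogeneous element then has unique
components of smallest and largest `ψ`-degree, which multiply under products; its width, the
difference of the two `ψ`-degrees, is additive, and width zero means finely homogeneous.

* Additivity of the width shows that coarsely homogeneous factors of a finely homogeneous element
  are finely homogeneous, so a coarse prime factorization is a fine one
  (`FactoriallyGraded.of_coarse`).
* A fine prime is a coarse prime (`KPrime.coarse`): look at the components of largest degree that
  the prime does not divide.
* If the fine grading is factorial, then so is the coarse one (`FactoriallyGraded.coarse`). Every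
  coarsely homogeneous `f ≠ 0` is a finely homogeneous element times a primitive one, i.e. one
  divisible by no fine prime (`exists_primitive`). A primitive element is a product of irreducible
  ones by induction on the width. A primitive irreducible `f` is prime: given `f ∣ g * h`, an
  element `d` of minimal width in the ideal `(f, g)` divides `f` and `g` up to finely homogeneous
  factors by pseudo-division (`exists_dvd_mul_of_minimal`), and these factors can be cancelled
  against the primitive part of `d` (`Primitive.dvd_of_dvd_mul`). So this primitive part divides
  both `f` and `g`; it is either associated to `f`, whence `f ∣ g`, or a unit, whence `f` divides
  a finely homogeneous multiple of `h` and therefore `h`.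
-/

/-! Definitions for factorially graded rings, following B. Bechtold,
"Factorially graded rings and Cox rings". -/

section Defs

variable {K R : Type*} [CommRing R]

/-- An element is `K`-homogeneous w.r.t. the grading `𝒜` if it lies in some component. -/
def Homog (𝒜 : K → AddSubgroup R) (f : R) : Prop :=
  ∃ w, f ∈ 𝒜 w

/-- `R` has no `K`-homogeneous zero divisors: the product of two nonzero homogeneous
elements is nonzero. -/
def NoHomogZeroDivisors (𝒜 : K → AddSubgroup R) : Prop :=
  ∀ f g : R, Homog 𝒜 f → Homog 𝒜 g → f ≠ 0 → g ≠ 0 → f * g ≠ 0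

/-- A nonzero homogeneous non-unit `f` is `K`-prime if whenever it divides a product of
homogeneous elements, it divides one of the factors. -/
def KPrime (𝒜 : K → AddSubgroup R) (f : R) : Prop :=
  f ≠ 0 ∧ ¬IsUnit f ∧ Homog 𝒜 f ∧
    ∀ g h : R, Homog 𝒜 g → Homog 𝒜 h → f ∣ g * h → f ∣ g ∨ f ∣ h

/-- A nonzero homogeneous non-unit `f` is `K`-irreducible if in any factorization of `f`
into two homogeneous factors one of the factors is a unit. -/
def KIrreducible (𝒜 : K → AddSubgroup R) (f : R) : Prop :=
  f ≠ 0 ∧ ¬IsUnit f ∧ Homog 𝒜 f ∧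
    ∀ g h : R, Homog 𝒜 g → Homog 𝒜 h → f = g * h → IsUnit g ∨ IsUnit h

/-- `R` is factorially `K`-graded: every nonzero homogeneous non-unit is a product of
`K`-prime elements. -/
def FactoriallyGraded (𝒜 : K → AddSubgroup R) : Prop :=
  ∀ f : R, Homog 𝒜 f → f ≠ 0 → ¬IsUnit f →
    ∃ l : Multiset R, (∀ p ∈ l, KPrime 𝒜 p) ∧ l.prod = f

/-- `R` is `K`-noetherian: every ideal generated by homogeneous elements is generated by
finitely many homogeneous elements. -/
def KNoetherian (𝒜 : K → AddSubgroup R) : Prop :=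
  ∀ s : Set R, (∀ x ∈ s, Homog 𝒜 x) →
    ∃ t : Finset R, (∀ x ∈ t, Homog 𝒜 x) ∧ Ideal.span (t : Set R) = Ideal.span s

end Defs

section Graded

variable {K R : Type*} [AddCommGroup K] [CommRing R]

/-- The Veronese subalgebra `R_{K'} = ⊕_{w ∈ K'} R_w` (as an additive subgroup of `R`). -/
def Veronese (𝒜 : K → AddSubgroup R) (K' : AddSubgroup K) : AddSubgroup R :=
  ⨆ w ∈ K', 𝒜 w

/-- Homogeneous of some degree belonging to the subgroup `K'`. -/
def VHomog (𝒜 : K → AddSubgroup R) (K' : AddSubgroup K) (f : R) : Prop :=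
  ∃ w ∈ K', f ∈ 𝒜 w

/-- Divisibility within a subset `V` of `R` (e.g. within a Veronese subring). -/
def DvdIn (V : Set R) (f g : R) : Prop :=
  ∃ c ∈ V, g = f * c

/-- Being a unit within a subset `V` of `R` (e.g. within a Veronese subring). -/
def IsUnitIn (V : Set R) (f : R) : Prop :=
  ∃ c ∈ V, f * c = 1

/-- `f` is `K'`-prime in the Veronese subring `R_{K'}` with its `K'`-grading. -/
def VPrime (𝒜 : K → AddSubgroup R) (K' : AddSubgroup K) (f : R) : Prop :=
  f ≠ 0 ∧ ¬IsUnitIn (Veronese 𝒜 K' : Set R) f ∧ VHomog 𝒜 K' f ∧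
    ∀ g h : R, VHomog 𝒜 K' g → VHomog 𝒜 K' h →
      DvdIn (Veronese 𝒜 K' : Set R) f (g * h) →
        DvdIn (Veronese 𝒜 K' : Set R) f g ∨ DvdIn (Veronese 𝒜 K' : Set R) f h

/-- The Veronese subring `R_{K'}` is factorially `K'`-graded. -/
def VFactorial (𝒜 : K → AddSubgroup R) (K' : AddSubgroup K) : Prop :=
  ∀ f : R, VHomog 𝒜 K' f → f ≠ 0 → ¬IsUnitIn (Veronese 𝒜 K' : Set R) f →
    ∃ l : Multiset R, (∀ p ∈ l, VPrime 𝒜 K' p) ∧ l.prod = f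

/-- `R` is `K'`-associated: every homogeneous element of `R` is a homogeneous unit times an
element of the Veronese subalgebra `R_{K'}`. -/
def KAssociated (𝒜 : K → AddSubgroup R) (K' : AddSubgroup K) : Prop :=
  ∀ f : R, Homog 𝒜 f → ∃ u r : R, Homog 𝒜 u ∧ IsUnit u ∧ r ∈ Veronese 𝒜 K' ∧ f = u * r

/-- `ℬ` is the natural `K`-grading on the localization `R' = S⁻¹R`, i.e.
`(S⁻¹R)_w = { r/s : r ∈ R_{deg s + w} }`. -/
def LocGrading (𝒜 : K → AddSubgroup R) (S : Submonoid R) (R' : Type*) [CommRing R']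
    [Algebra R R'] (ℬ : K → AddSubgroup R') : Prop :=
  ∀ (w : K) (x : R'), x ∈ ℬ w ↔
    ∃ (r s : R) (v : K), s ∈ S ∧ s ∈ 𝒜 v ∧ r ∈ 𝒜 (v + w) ∧
      x * algebraMap R R' s = algebraMap R R' r

/-- The `K`-grading on the polynomial ring `R[T]` extending `𝒜`, in which `T` is
homogeneous of degree `w`: the degree-`d` part is spanned by the monomials `a·Tⁿ`
with `a ∈ R_{d - n·w}`. -/
def polyGrading (𝒜 : K → AddSubgroup R) (w : K) : K → AddSubgroup (Polynomial R) :=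
  fun d =>
    { carrier := { f : Polynomial R | ∀ n : ℕ, f.coeff n ∈ 𝒜 (d - n • w) }
      zero_mem' := by
        intro n
        rw [Polynomial.coeff_zero]
        exact zero_mem _
      add_mem' := by
        intro f g hf hg n
        rw [Polynomial.coeff_add]
        exact add_mem (hf n) (hg n)
      neg_mem' := by
        intro f hf n
        rw [Polynomial.coeff_neg]
        exact neg_mem (hf n) }

/-- The coarsened `K`-grading associated with a `K ⊕ ℤᵐ`-grading (or any grading by a
product group): the component of degree `w ∈ K` is `⊕_v R_{(w,v)}`. -/
def coarsen {V : Type*} (𝒜 : K × V → AddSubgroup R) : K → AddSubgroup R :=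
  fun w => ⨆ v : V, 𝒜 (w, v)

end Graded

set_option linter.unusedSectionVars false

/-! ### Homogeneous components and divisibility in a graded ring -/

section General

variable {G R : Type*} [AddCommGroup G] [DecidableEq G] [CommRing R]
  (𝒜 : G → AddSubgroup R) [GradedRing 𝒜]

/-- The homogeneous component of degree `i` of `x`, as an element of `R`. -/
def hcomp (x : R) (i : G) : R := (DirectSum.decompose 𝒜 x i : R)

variable {𝒜}

theorem hcomp_mem (x : R) (i : G) : hcomp 𝒜 x i ∈ 𝒜 i := SetLike.coe_mem _

theorem homog_hcomp (x : R) (i : G) : Homog 𝒜 (hcomp 𝒜 x i) := ⟨i, hcomp_mem x i⟩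

theorem hcomp_of_mem {x : R} {i : G} (h : x ∈ 𝒜 i) : hcomp 𝒜 x i = x :=
  DirectSum.decompose_of_mem_same 𝒜 h

theorem eq_of_hcomp_ne_zero {x : R} {i j : G} (h : x ∈ 𝒜 i) (hj : hcomp 𝒜 x j ≠ 0) : j = i := by
  by_contra hne
  exact hj (DirectSum.decompose_of_mem_ne 𝒜 h (Ne.symm hne))

theorem hcomp_zero (i : G) : hcomp 𝒜 (0 : R) i = 0 := by simp [hcomp]

theorem hcomp_add (x y : R) (i : G) : hcomp 𝒜 (x + y) i = hcomp 𝒜 x i + hcomp 𝒜 y i := by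
  simp [hcomp]

theorem hcomp_sub (x y : R) (i : G) : hcomp 𝒜 (x - y) i = hcomp 𝒜 x i - hcomp 𝒜 y i := by
  simp [hcomp]

theorem hcomp_mul_of_mem {a : R} {i : G} (ha : a ∈ 𝒜 i) (b : R) (j : G) :
    hcomp 𝒜 (a * b) j = a * hcomp 𝒜 b (j - i) := by
  have := DirectSum.coe_decompose_mul_add_of_left_mem 𝒜 (j := j - i) (b := b) ha
  rwa [add_sub_cancel] at this

variable (𝒜) in
theorem exists_hsupport (x : R) :
    ∃ s : Finset G, (∀ i, i ∈ s ↔ hcomp 𝒜 x i ≠ 0) ∧ ∑ i ∈ s, hcomp 𝒜 x i = x := by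
  classical
  refine ⟨(DirectSum.decompose 𝒜 x).support, fun i => ?_, DirectSum.sum_support_decompose 𝒜 x⟩
  rw [DFinsupp.mem_support_iff, hcomp]
  simp

theorem eq_zero_of_hcomp {x : R} (h : ∀ i, hcomp 𝒜 x i = 0) : x = 0 := by
  obtain ⟨s, -, hx⟩ := exists_hsupport 𝒜 x
  rw [← hx]
  exact Finset.sum_eq_zero fun i _ => h i

theorem exists_hcomp_ne_zero {x : R} (hx : x ≠ 0) : ∃ i, hcomp 𝒜 x i ≠ 0 := by
  by_contra! h
  exact hx (eq_zero_of_hcomp h)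

/-- Modulo an ideal containing all other products of components of complementary degrees,
the component of degree `i + j` of `x * y` is the product of the components of degrees
`i` and `j`. -/
theorem hcomp_mul_sub_mem (I : Ideal R) (x y : R) (i j : G)
    (h : ∀ i' j', i' + j' = i + j → ¬(i' = i ∧ j' = j) → hcomp 𝒜 x i' * hcomp 𝒜 y j' ∈ I) :
    hcomp 𝒜 (x * y) (i + j) - hcomp 𝒜 x i * hcomp 𝒜 y j ∈ I := by
  classical
  obtain ⟨s, hs, hx⟩ := exists_hsupport 𝒜 x
  have hexp : hcomp 𝒜 (x * y) (i + j) =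
      ∑ a ∈ s, hcomp 𝒜 x a * hcomp 𝒜 y (i + j - a) := by
    conv_lhs => rw [← hx, Finset.sum_mul]
    have : ∀ t : Finset G, hcomp 𝒜 (∑ a ∈ t, hcomp 𝒜 x a * y) (i + j) =
        ∑ a ∈ t, hcomp 𝒜 x a * hcomp 𝒜 y (i + j - a) := by
      intro t
      induction t using Finset.induction_on with
      | empty => simp [hcomp_zero]
      | insert a t ha ih =>
        rw [Finset.sum_insert ha, Finset.sum_insert ha, hcomp_add, ih,
          hcomp_mul_of_mem (hcomp_mem x a)]
    exact this s
  have hterm : ∀ a, a ≠ i → hcomp 𝒜 x a * hcomp 𝒜 y (i + j - a) ∈ I := fun a ha =>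
    h a (i + j - a) (by abel) (fun hh => ha hh.1)
  rw [hexp]
  by_cases hi : i ∈ s
  · rw [← Finset.add_sum_erase s _ hi, add_sub_cancel_left, add_sub_cancel_left]
    exact Ideal.sum_mem I fun a ha => hterm a (Finset.ne_of_mem_erase ha)
  · have h0 : hcomp 𝒜 x i = 0 := by
      by_contra h0
      exact hi ((hs i).2 h0)
    rw [h0, zero_mul, sub_zero]
    exact Ideal.sum_mem I fun a ha => hterm a (fun hai => hi (hai ▸ ha))

theorem hcomp_mul_eq (x y : R) (i j : G)
    (h : ∀ i' j', hcomp 𝒜 x i' ≠ 0 → hcomp 𝒜 y j' ≠ 0 → i' + j' = i + j → i' = i ∧ j' = j) :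
    hcomp 𝒜 (x * y) (i + j) = hcomp 𝒜 x i * hcomp 𝒜 y j := by
  rw [← sub_eq_zero, ← Ideal.mem_bot]
  refine hcomp_mul_sub_mem ⊥ x y i j fun i' j' hij hne => ?_
  rw [Ideal.mem_bot]
  by_contra h0
  exact hne (h i' j' (left_ne_zero_of_mul h0) (right_ne_zero_of_mul h0) hij)

theorem exists_of_hcomp_mul_ne_zero {x y : R} {n : G} (h : hcomp 𝒜 (x * y) n ≠ 0) :
    ∃ i j, hcomp 𝒜 x i ≠ 0 ∧ hcomp 𝒜 y j ≠ 0 ∧ i + j = n := by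
  by_contra! hc
  apply h
  have := hcomp_mul_eq (𝒜 := 𝒜) x y 0 n
    (fun i' j' hi hj hij => absurd (by simpa using hij) (hc i' j' hi hj))
  rw [zero_add] at this
  rw [this]
  by_contra h0
  exact hc 0 n (left_ne_zero_of_mul h0) (right_ne_zero_of_mul h0) (zero_add n)

theorem homog_one : Homog 𝒜 (1 : R) := ⟨0, SetLike.GradedOne.one_mem⟩

theorem Homog.mul {x y : R} (hx : Homog 𝒜 x) (hy : Homog 𝒜 y) : Homog 𝒜 (x * y) := by
  obtain ⟨i, hi⟩ := hx
  obtain ⟨j, hj⟩ := hy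
  exact ⟨i + j, SetLike.GradedMul.mul_mem hi hj⟩

theorem homog_multiset_prod {l : Multiset R} (hl : ∀ p ∈ l, Homog 𝒜 p) : Homog 𝒜 l.prod := by
  induction l using Multiset.induction_on with
  | empty => simpa using homog_one
  | cons a l ih =>
    rw [Multiset.prod_cons]
    exact (hl a (Multiset.mem_cons_self a l)).mul
      (ih fun p hp => hl p (Multiset.mem_cons_of_mem hp))

/-- Nonzero homogeneous elements are cancellable against arbitrary elements. -/
theorem homog_cancel (hzd : NoHomogZeroDivisors 𝒜) {a b c : R} (ha : Homog 𝒜 a) (ha0 : a ≠ 0)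
    (h : a * b = a * c) : b = c := by
  rw [← sub_eq_zero]
  obtain ⟨i, hi⟩ := ha
  refine eq_zero_of_hcomp (𝒜 := 𝒜) fun j => ?_
  by_contra hj
  apply hzd a _ ⟨i, hi⟩ (homog_hcomp _ _) ha0 hj
  have := hcomp_mul_of_mem hi (b - c) (j + i)
  rw [add_sub_cancel_right, mul_sub, h, sub_self, hcomp_zero] at this
  exact this.symm

theorem Homog.exists_eq_mul {a x : R} (ha : Homog 𝒜 a) (hx : Homog 𝒜 x) (h : a ∣ x) :
    ∃ c, Homog 𝒜 c ∧ x = a * c := by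
  obtain ⟨i, hi⟩ := ha
  obtain ⟨j, hj⟩ := hx
  obtain ⟨c, rfl⟩ := h
  refine ⟨_, homog_hcomp c (j - i), ?_⟩
  rw [← hcomp_mul_of_mem hi, hcomp_of_mem hj]

theorem Homog.dvd_hcomp {a x : R} (ha : Homog 𝒜 a) (h : a ∣ x) (j : G) : a ∣ hcomp 𝒜 x j := by
  obtain ⟨i, hi⟩ := ha
  obtain ⟨c, rfl⟩ := h
  exact ⟨_, hcomp_mul_of_mem hi c j⟩

theorem dvd_of_forall_dvd_hcomp {a x : R} (h : ∀ j, a ∣ hcomp 𝒜 x j) : a ∣ x := by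
  obtain ⟨s, -, hx⟩ := exists_hsupport 𝒜 x
  rw [← hx]
  exact Finset.dvd_sum fun j _ => h j

theorem KPrime.homog {p : R} (hp : KPrime 𝒜 p) : Homog 𝒜 p := hp.2.2.1

theorem KPrime.exists_dvd_of_dvd_prod {p : R} (hp : KPrime 𝒜 p) {l : Multiset R}
    (hl : ∀ q ∈ l, Homog 𝒜 q) (h : p ∣ l.prod) : ∃ q ∈ l, p ∣ q := by
  induction l using Multiset.induction_on with
  | empty => exact absurd (isUnit_of_dvd_one (by simpa using h)) hp.2.1
  | cons a l ih =>
    have hl' : ∀ q ∈ l, Homog 𝒜 q := fun q hq => hl q (Multiset.mem_cons_of_mem hq)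
    rw [Multiset.prod_cons] at h
    rcases hp.2.2.2 a l.prod (hl a (Multiset.mem_cons_self a l)) (homog_multiset_prod hl') h with
      h | h
    · exact ⟨a, Multiset.mem_cons_self a l, h⟩
    · obtain ⟨q, hq, hpq⟩ := ih hl' h
      exact ⟨q, Multiset.mem_cons_of_mem hq, hpq⟩

theorem KPrime.unit_mul {u p : R} (hu : IsUnit u) (huh : Homog 𝒜 u) (hp : KPrime 𝒜 p) :
    KPrime 𝒜 (u * p) := by
  refine ⟨?_, ?_, huh.mul hp.homog, ?_⟩
  · rw [Ne, hu.mul_right_eq_zero]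
    exact hp.1
  · rw [IsUnit.mul_iff]
    exact fun h => hp.2.1 h.2
  · intro g h hg hh hd
    rw [hu.mul_left_dvd] at hd ⊢
    rw [hu.mul_left_dvd]
    exact hp.2.2.2 g h hg hh hd

/-- `x` is a unit or a product of prime elements with respect to the grading `𝒜`. -/
def PrimeProd (𝒜 : G → AddSubgroup R) (x : R) : Prop :=
  IsUnit x ∨ ∃ l : Multiset R, (∀ p ∈ l, KPrime 𝒜 p) ∧ l.prod = x

theorem FactoriallyGraded.primeProd (h : FactoriallyGraded 𝒜) {x : R} (hx : Homog 𝒜 x)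
    (hx0 : x ≠ 0) : PrimeProd 𝒜 x := by
  by_cases hu : IsUnit x
  · exact Or.inl hu
  · exact Or.inr (h x hx hx0 hu)

theorem PrimeProd.unit_mul {u x : R} (huh : Homog 𝒜 u) (hu : IsUnit u) (hx : PrimeProd 𝒜 x) :
    PrimeProd 𝒜 (u * x) := by
  rcases hx with hx | ⟨l, hl, rfl⟩
  · exact Or.inl (hu.mul hx)
  · induction l using Multiset.induction_on with
    | empty => exact Or.inl (by simpa using hu)
    | cons a l _ =>
      refine Or.inr ⟨(u * a) ::ₘ l, ?_, by simp [mul_assoc]⟩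
      intro p hp
      rcases Multiset.mem_cons.1 hp with rfl | hp
      · exact (hl a (Multiset.mem_cons_self a l)).unit_mul hu huh
      · exact hl p (Multiset.mem_cons_of_mem hp)

theorem PrimeProd.mul {x y : R} (hxh : Homog 𝒜 x) (hyh : Homog 𝒜 y) (hx : PrimeProd 𝒜 x)
    (hy : PrimeProd 𝒜 y) : PrimeProd 𝒜 (x * y) := by
  by_cases hxu : IsUnit x
  · exact hy.unit_mul hxh hxu
  by_cases hyu : IsUnit y
  · rw [mul_comm]
    exact hx.unit_mul hyh hyu
  obtain ⟨l, hl, rfl⟩ := hx.resolve_left hxu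
  obtain ⟨l', hl', rfl⟩ := hy.resolve_left hyu
  refine Or.inr ⟨l + l', fun p hp => ?_, Multiset.prod_add l l'⟩
  rcases Multiset.mem_add.1 hp with hp | hp
  exacts [hl p hp, hl' p hp]

/-- Primes not dividing `f` can be cancelled from a multiple of `f`. -/
theorem dvd_of_dvd_prod_mul (hzd : NoHomogZeroDivisors 𝒜) {f x : R} (hf : Homog 𝒜 f)
    (hx : Homog 𝒜 x) {l : Multiset R} (hl : ∀ p ∈ l, KPrime 𝒜 p) (hlf : ∀ p ∈ l, ¬ p ∣ f)
    (h : f ∣ l.prod * x) : f ∣ x := by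
  induction l using Multiset.induction_on with
  | empty => simpa using h
  | cons p l ih =>
    have hl' : ∀ q ∈ l, KPrime 𝒜 q := fun q hq => hl q (Multiset.mem_cons_of_mem hq)
    have hp := hl p (Multiset.mem_cons_self p l)
    have hlx : Homog 𝒜 (l.prod * x) := (homog_multiset_prod fun q hq => (hl' q hq).homog).mul hx
    refine ih hl' (fun q hq => hlf q (Multiset.mem_cons_of_mem hq)) ?_
    rw [Multiset.prod_cons, mul_assoc] at h
    obtain ⟨e, he, hfe⟩ := hf.exists_eq_mul (hp.homog.mul hlx) h
    obtain ⟨e', rfl⟩ := (hp.2.2.2 f e hf he ⟨_, hfe.symm⟩).resolve_left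
      (hlf p (Multiset.mem_cons_self p l))
    refine ⟨e', homog_cancel hzd hp.homog hp.1 ?_⟩
    rw [hfe]
    ring

end General

/-! ### Coarsening a grading along a homomorphism of the grading groups -/

section Coarse

variable {G H R : Type*} [AddCommGroup G] [DecidableEq G] [AddCommGroup H] [DecidableEq H]
  [CommRing R]

/-- The coarsening of a `G`-grading along `φ : G →+ H`: the component of degree `h` is the sum of
all `𝒜 g` with `φ g = h`. -/
def coarseAlong (φ : G →+ H) (𝒜 : G → AddSubgroup R) : H → AddSubgroup R :=
  fun h => ⨆ g, ⨆ (_ : φ g = h), 𝒜 g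

theorem mem_coarseAlong_of_mem {φ : G →+ H} {𝒜 : G → AddSubgroup R} {x : R} {g : G} {h : H}
    (hx : x ∈ 𝒜 g) (hg : φ g = h) : x ∈ coarseAlong φ 𝒜 h :=
  (le_iSup₂ (f := fun g (_ : φ g = h) => 𝒜 g) g hg) hx

theorem coarseAlong_le {φ : G →+ H} {𝒜 : G → AddSubgroup R} {h : H} {N : AddSubgroup R}
    (hN : ∀ g, φ g = h → 𝒜 g ≤ N) : coarseAlong φ 𝒜 h ≤ N :=
  iSup₂_le hN

variable {φ : G →+ H} {𝒜 : G → AddSubgroup R}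

theorem Homog.coarse {x : R} (hx : Homog 𝒜 x) : Homog (coarseAlong φ 𝒜) x := by
  obtain ⟨g, hg⟩ := hx
  exact ⟨φ g, mem_coarseAlong_of_mem hg rfl⟩

theorem mem_coarseAlong_iff [GradedRing 𝒜] {x : R} {h : H} :
    x ∈ coarseAlong φ 𝒜 h ↔ ∀ g, hcomp 𝒜 x g ≠ 0 → φ g = h := by
  constructor
  · intro hx
    let N : AddSubgroup R :=
      { carrier := { y | ∀ g, φ g ≠ h → hcomp 𝒜 y g = 0 }
        zero_mem' := fun g _ => hcomp_zero g
        add_mem' := fun {a b} ha hb g hg => by rw [hcomp_add, ha g hg, hb g hg, add_zero]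
        neg_mem' := fun {a} ha g hg => by
          rw [← zero_sub, hcomp_sub, ha g hg, hcomp_zero, sub_zero] }
    have hle : coarseAlong φ 𝒜 h ≤ N := coarseAlong_le fun g hg y hy g' hg' => by
      by_contra h0
      exact hg' (eq_of_hcomp_ne_zero hy h0 ▸ hg)
    intro g hg
    by_contra hne
    exact hg (hle hx g hne)
  · intro hx
    obtain ⟨s, hs, hsum⟩ := exists_hsupport 𝒜 x
    rw [← hsum]
    exact sum_mem fun g hg => mem_coarseAlong_of_mem (hcomp_mem x g) (hx g ((hs g).1 hg))

variable (φ 𝒜) in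
/-- The decomposition map of the coarsening: each component of degree `g` is placed in
degree `φ g`. -/
noncomputable def coarseDecompose [GradedRing 𝒜] : R →+ DirectSum H fun h => coarseAlong φ 𝒜 h :=
  (DirectSum.toAddMonoid fun g =>
    (DirectSum.of (fun h => coarseAlong φ 𝒜 h) (φ g)).comp
      (AddSubgroup.inclusion fun _ hx => mem_coarseAlong_of_mem hx rfl)).comp
    (DirectSum.decomposeAddEquiv 𝒜).toAddMonoidHom

theorem coarseDecompose_of_mem [GradedRing 𝒜] {x : R} {g : G} {h : H} (hx : x ∈ 𝒜 g)
    (hg : φ g = h) :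
    coarseDecompose φ 𝒜 x = DirectSum.of (fun h => coarseAlong φ 𝒜 h) h
      ⟨x, mem_coarseAlong_of_mem hx hg⟩ := by
  subst hg
  simp only [coarseDecompose, AddMonoidHom.comp_apply]
  have : (DirectSum.decomposeAddEquiv 𝒜).toAddMonoidHom x = DirectSum.of (fun i => 𝒜 i) g ⟨x, hx⟩ :=
    DirectSum.decompose_of_mem 𝒜 hx
  rw [this, DirectSum.toAddMonoid_of]
  rfl

variable (φ 𝒜) in
/-- The coarsening of a grading is a grading. -/
@[reducible]
noncomputable def coarseGradedRing [GradedRing 𝒜] : GradedRing (coarseAlong φ 𝒜) :=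
  { one_mem := mem_coarseAlong_of_mem (SetLike.GradedOne.one_mem (A := 𝒜)) (map_zero φ)
    mul_mem := by
      intro i j x y hx hy
      rw [mem_coarseAlong_iff] at *
      intro g hg
      obtain ⟨a, b, ha, hb, rfl⟩ := exists_of_hcomp_mul_ne_zero hg
      rw [map_add, hx a ha, hy b hb]
    toDecomposition := DirectSum.Decomposition.ofAddHom _ (coarseDecompose φ 𝒜)
      (by
        ext x
        obtain ⟨s, -, hsum⟩ := exists_hsupport 𝒜 x
        rw [← hsum, map_sum, map_sum]
        refine Finset.sum_congr rfl fun g _ => ?_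
        rw [AddMonoidHom.comp_apply, coarseDecompose_of_mem (hcomp_mem x g) rfl,
          DirectSum.coeAddMonoidHom_of]
        rfl)
      (by
        refine DirectSum.addHom_ext fun h x => ?_
        obtain ⟨x, hx⟩ := x
        rw [AddMonoidHom.comp_apply, DirectSum.coeAddMonoidHom_of, AddMonoidHom.id_apply]
        obtain ⟨s, hs, hsum⟩ := exists_hsupport 𝒜 x
        have hφ : ∀ g ∈ s, φ g = h := fun g hg => mem_coarseAlong_iff.1 hx g ((hs g).1 hg)
        have key : (⟨x, hx⟩ : coarseAlong φ 𝒜 h) = ∑ g ∈ s.attach,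
            ⟨hcomp 𝒜 x g, mem_coarseAlong_of_mem (hcomp_mem x _) (hφ g.1 g.2)⟩ := by
          apply Subtype.ext
          rw [AddSubgroup.val_finsetSum]
          exact (hsum.symm).trans (Finset.sum_attach s (hcomp 𝒜 x)).symm
        change coarseDecompose φ 𝒜 x = _
        rw [key, map_sum]
        conv_lhs => rw [← hsum, ← Finset.sum_attach, map_sum]
        exact Finset.sum_congr rfl fun g _ =>
          coarseDecompose_of_mem (hcomp_mem x _) (hφ g.1 g.2)) }

end Coarse

/-! ### Extremal degrees with respect to one integer direction -/

section Step

variable {G H R : Type*} [AddCommGroup G] [DecidableEq G] [AddCommGroup H] [DecidableEq H]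
  [CommRing R]

/-- Among the degrees of the nonzero components of `x`, all of which have the same image under
`φ`, the degree `i` has the smallest and `j` the largest value under `ψ`. -/
def Extremal (φ : G →+ H) (ψ : G →+ ℤ) (𝒜 : G → AddSubgroup R) [GradedRing 𝒜] (x : R)
    (i j : G) : Prop :=
  hcomp 𝒜 x i ≠ 0 ∧ hcomp 𝒜 x j ≠ 0 ∧
    ∀ l, hcomp 𝒜 x l ≠ 0 → φ l = φ i ∧ ψ i ≤ ψ l ∧ ψ l ≤ ψ j

/-- The `ψ`-degrees of the nonzero coarsely homogeneous element `x` span an interval of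
length `n`. -/
def HasWidth (φ : G →+ H) (ψ : G →+ ℤ) (𝒜 : G → AddSubgroup R) [GradedRing 𝒜] (n : ℕ)
    (x : R) : Prop :=
  ∃ i j, Extremal φ ψ 𝒜 x i j ∧ ψ j - ψ i = n

variable {φ : G →+ H} {ψ : G →+ ℤ} {𝒜 : G → AddSubgroup R} [GradedRing 𝒜]

theorem exists_extremal {x : R} (hx : Homog (coarseAlong φ 𝒜) x) (hx0 : x ≠ 0) :
    ∃ i j, Extremal φ ψ 𝒜 x i j := by
  obtain ⟨h, hx⟩ := hx
  rw [mem_coarseAlong_iff] at hx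
  obtain ⟨s, hs, -⟩ := exists_hsupport 𝒜 x
  obtain ⟨g, hg⟩ := exists_hcomp_ne_zero (𝒜 := 𝒜) hx0
  have hne : s.Nonempty := ⟨g, (hs g).2 hg⟩
  obtain ⟨i, hi, himin⟩ := s.exists_min_image ψ hne
  obtain ⟨j, hj, hjmax⟩ := s.exists_max_image ψ hne
  refine ⟨i, j, (hs i).1 hi, (hs j).1 hj, fun l hl => ⟨?_, ?_, ?_⟩⟩
  · rw [hx l hl, hx i ((hs i).1 hi)]
  · exact himin l ((hs l).2 hl)
  · exact hjmax l ((hs l).2 hl)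

theorem exists_hasWidth {x : R} (hx : Homog (coarseAlong φ 𝒜) x) (hx0 : x ≠ 0) :
    ∃ n, HasWidth φ ψ 𝒜 n x := by
  obtain ⟨i, j, h⟩ := exists_extremal (ψ := ψ) hx hx0
  refine ⟨(ψ j - ψ i).toNat, i, j, h, ?_⟩
  have := (h.2.2 j h.2.1).2.1
  lia

theorem Extremal.homog {x : R} {i j : G} (h : Extremal φ ψ 𝒜 x i j) :
    Homog (coarseAlong φ 𝒜) x :=
  ⟨φ i, mem_coarseAlong_iff.2 fun l hl => (h.2.2 l hl).1⟩

theorem HasWidth.homog {n : ℕ} {x : R} (h : HasWidth φ ψ 𝒜 n x) :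
    Homog (coarseAlong φ 𝒜) x := by
  obtain ⟨i, j, h, -⟩ := h
  exact h.homog

theorem HasWidth.unique {n n' : ℕ} {x : R} (h : HasWidth φ ψ 𝒜 n x)
    (h' : HasWidth φ ψ 𝒜 n' x) : n = n' := by
  obtain ⟨i, j, h, hn⟩ := h
  obtain ⟨i', j', h', hn'⟩ := h'
  have h1 := h.2.2 i' h'.1
  have h2 := h.2.2 j' h'.2.1
  have h3 := h'.2.2 i h.1
  have h4 := h'.2.2 j h.2.1
  lia

/-- The outer components of a product are the products of the outer components. -/
theorem Extremal.hcomp_mul (hinj : ∀ a b, φ a = φ b → ψ a = ψ b → a = b) {x y : R}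
    {i j i' j' : G} (hx : Extremal φ ψ 𝒜 x i j) (hy : Extremal φ ψ 𝒜 y i' j') :
    hcomp 𝒜 (x * y) (i + i') = hcomp 𝒜 x i * hcomp 𝒜 y i' ∧
    hcomp 𝒜 (x * y) (j + j') = hcomp 𝒜 x j * hcomp 𝒜 y j' := by
  constructor
  · refine hcomp_mul_eq x y i i' fun a b ha hb hab => ?_
    have h1 := hx.2.2 a ha
    have h2 := hy.2.2 b hb
    have h3 : ψ a + ψ b = ψ i + ψ i' := by rw [← map_add, hab, map_add]
    exact ⟨hinj _ _ h1.1 (by lia), hinj _ _ h2.1 (by lia)⟩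
  · refine hcomp_mul_eq x y j j' fun a b ha hb hab => ?_
    have h1 := hx.2.2 a ha
    have h2 := hy.2.2 b hb
    have h1' := hx.2.2 j hx.2.1
    have h2' := hy.2.2 j' hy.2.1
    have h3 : ψ a + ψ b = ψ j + ψ j' := by rw [← map_add, hab, map_add]
    exact ⟨hinj _ _ (h1.1.trans h1'.1.symm) (by lia), hinj _ _ (h2.1.trans h2'.1.symm) (by lia)⟩

theorem Extremal.mul (hinj : ∀ a b, φ a = φ b → ψ a = ψ b → a = b)
    (hzd : NoHomogZeroDivisors 𝒜) {x y : R}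
    {i j i' j' : G} (hx : Extremal φ ψ 𝒜 x i j) (hy : Extremal φ ψ 𝒜 y i' j') :
    Extremal φ ψ 𝒜 (x * y) (i + i') (j + j') := by
  obtain ⟨h1, h2⟩ := hx.hcomp_mul hinj hy
  refine ⟨?_, ?_, fun l hl => ?_⟩
  · rw [h1]
    exact hzd _ _ (homog_hcomp _ _) (homog_hcomp _ _) hx.1 hy.1
  · rw [h2]
    exact hzd _ _ (homog_hcomp _ _) (homog_hcomp _ _) hx.2.1 hy.2.1
  · obtain ⟨a, b, ha, hb, rfl⟩ := exists_of_hcomp_mul_ne_zero hl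
    have h1 := hx.2.2 a ha
    have h2 := hy.2.2 b hb
    simp only [map_add]
    exact ⟨by rw [h1.1, h2.1], by lia, by lia⟩

theorem HasWidth.mul (hinj : ∀ a b, φ a = φ b → ψ a = ψ b → a = b)
    (hzd : NoHomogZeroDivisors 𝒜) {x y : R} {n n' : ℕ} (hx : HasWidth φ ψ 𝒜 n x)
    (hy : HasWidth φ ψ 𝒜 n' y) : HasWidth φ ψ 𝒜 (n + n') (x * y) := by
  obtain ⟨i, j, hx, hn⟩ := hx
  obtain ⟨i', j', hy, hn'⟩ := hy
  refine ⟨_, _, hx.mul hinj hzd hy, ?_⟩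
  simp only [map_add]
  lia

theorem Extremal.ne_zero {x : R} {i j : G} (hx : Extremal φ ψ 𝒜 x i j) : x ≠ 0 := by
  rintro rfl
  exact hx.1 (hcomp_zero i)

theorem HasWidth.ne_zero {x : R} {n : ℕ} (hx : HasWidth φ ψ 𝒜 n x) : x ≠ 0 := by
  obtain ⟨i, j, h, -⟩ := hx
  exact h.ne_zero

theorem HasWidth.homog_of_zero (hinj : ∀ a b, φ a = φ b → ψ a = ψ b → a = b) {x : R}
    (hx : HasWidth φ ψ 𝒜 0 x) : Homog 𝒜 x := by
  obtain ⟨i, j, hx, hn⟩ := hx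
  obtain ⟨s, hs, hsum⟩ := exists_hsupport 𝒜 x
  refine ⟨i, ?_⟩
  rw [← hsum]
  refine sum_mem fun l hl => ?_
  have h := hx.2.2 l ((hs l).1 hl)
  have : l = i := hinj _ _ h.1 (by lia)
  rw [this]
  exact hcomp_mem x i

theorem Homog.hasWidth_zero {x : R} (hx : Homog 𝒜 x) (hx0 : x ≠ 0) : HasWidth φ ψ 𝒜 0 x := by
  obtain ⟨i, hi⟩ := hx
  have h : hcomp 𝒜 x i ≠ 0 := by rwa [hcomp_of_mem hi]
  refine ⟨i, i, ⟨h, h, fun l hl => ?_⟩, by simp⟩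
  rw [eq_of_hcomp_ne_zero hi hl]
  exact ⟨rfl, le_rfl, le_rfl⟩

theorem coarse_noHomogZeroDivisors (hinj : ∀ a b, φ a = φ b → ψ a = ψ b → a = b)
    (hzd : NoHomogZeroDivisors 𝒜) : NoHomogZeroDivisors (coarseAlong φ 𝒜) := by
  intro f g hf hg hf0 hg0
  obtain ⟨i, j, hf⟩ := exists_extremal (ψ := ψ) hf hf0
  obtain ⟨i', j', hg⟩ := exists_extremal (ψ := ψ) hg hg0
  exact (hf.mul hinj hzd hg).ne_zero

/-- A coarsely homogeneous factor of a nonzero finely homogeneous element is finely homogeneous,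
since widths are additive. -/
theorem homog_of_mul_homog (hinj : ∀ a b, φ a = φ b → ψ a = ψ b → a = b)
    (hzd : NoHomogZeroDivisors 𝒜) {x y : R} (hx : Homog (coarseAlong φ 𝒜) x)
    (hy : Homog (coarseAlong φ 𝒜) y) (hxy : Homog 𝒜 (x * y)) (h0 : x * y ≠ 0) : Homog 𝒜 x := by
  obtain ⟨n, hn⟩ := exists_hasWidth (ψ := ψ) hx (left_ne_zero_of_mul h0)
  obtain ⟨n', hn'⟩ := exists_hasWidth (ψ := ψ) hy (right_ne_zero_of_mul h0)
  have := (hn.mul hinj hzd hn').unique (hxy.hasWidth_zero h0)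
  obtain rfl : n = 0 := by lia
  exact hn.homog_of_zero hinj

/-! ### Comparing primes of the two gradings -/

/-- A fine prime stays prime after coarsening: if `p` divides neither `g` nor `h`, it does not
divide the product of the components of `g` and `h` of largest `ψ`-degree that are not divisible
by `p`, and modulo `p` this product is a component of `g * h`. -/
theorem KPrime.coarse (hinj : ∀ a b, φ a = φ b → ψ a = ψ b → a = b) {p : R}
    (hp : KPrime 𝒜 p) : KPrime (coarseAlong φ 𝒜) p := by
  refine ⟨hp.1, hp.2.1, hp.homog.coarse, fun g h hg hh hd => ?_⟩
  by_contra! hc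
  have key : ∀ x : R, Homog (coarseAlong φ 𝒜) x → ¬ p ∣ x →
      ∃ i, ¬ p ∣ hcomp 𝒜 x i ∧
        ∀ l, ¬ p ∣ hcomp 𝒜 x l → φ l = φ i ∧ ψ l ≤ ψ i := by
    intro x ⟨k, hx⟩ hpx
    classical
    rw [mem_coarseAlong_iff] at hx
    have hx' : ∀ l, ¬ p ∣ hcomp 𝒜 x l → hcomp 𝒜 x l ≠ 0 := fun l hl h0 => hl (h0 ▸ dvd_zero p)
    obtain ⟨s, hs, -⟩ := exists_hsupport 𝒜 x
    have hne : (s.filter fun l => ¬ p ∣ hcomp 𝒜 x l).Nonempty := by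
      by_contra hemp
      refine hpx (dvd_of_forall_dvd_hcomp (𝒜 := 𝒜) fun l => ?_)
      by_contra hl
      exact hemp ⟨l, Finset.mem_filter.2 ⟨(hs l).2 (hx' l hl), hl⟩⟩
    obtain ⟨i, hi, hmax⟩ := Finset.exists_max_image _ ψ hne
    have hi := (Finset.mem_filter.1 hi).2
    refine ⟨i, hi, fun l hl => ⟨?_, ?_⟩⟩
    · rw [hx l (hx' l hl), hx i (hx' i hi)]
    · exact hmax l (Finset.mem_filter.2 ⟨(hs l).2 (hx' l hl), hl⟩)
  obtain ⟨i, hi, hi'⟩ := key g hg hc.1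
  obtain ⟨j, hj, hj'⟩ := key h hh hc.2
  have hmem := hcomp_mul_sub_mem (𝒜 := 𝒜) (Ideal.span {p}) g h i j fun a b hab hne => by
    rw [Ideal.mem_span_singleton]
    by_contra hnd
    have h1 := hi' a fun hd => hnd (hd.mul_right _)
    have h2 := hj' b fun hd => hnd (hd.mul_left _)
    have h3 : ψ a + ψ b = ψ i + ψ j := by rw [← map_add, hab, map_add]
    exact hne ⟨hinj _ _ h1.1 (by lia), hinj _ _ h2.1 (by lia)⟩
  rw [Ideal.mem_span_singleton] at hmem
  have hdvd : p ∣ hcomp 𝒜 g i * hcomp 𝒜 h j :=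
    (dvd_sub_right (hp.homog.dvd_hcomp hd (i + j))).1 hmem
  rcases hp.2.2.2 _ _ (homog_hcomp g i) (homog_hcomp h j) hdvd with h | h
  exacts [hi h, hj h]

theorem KPrime.of_coarse {p : R} (hp : KPrime (coarseAlong φ 𝒜) p) (hph : Homog 𝒜 p) :
    KPrime 𝒜 p :=
  ⟨hp.1, hp.2.1, hph, fun g h hg hh => hp.2.2.2 g h hg.coarse hh.coarse⟩

theorem FactoriallyGraded.of_coarse (hinj : ∀ a b, φ a = φ b → ψ a = ψ b → a = b)
    (hzd : NoHomogZeroDivisors 𝒜) (hfac : FactoriallyGraded (coarseAlong φ 𝒜)) :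
    FactoriallyGraded 𝒜 := by
  intro f hf hf0 hfu
  obtain ⟨l, hl, rfl⟩ := hfac f hf.coarse hf0 hfu
  let _ := coarseGradedRing φ 𝒜
  refine ⟨l, fun p hp => (hl p hp).of_coarse ?_, rfl⟩
  obtain ⟨l', rfl⟩ := Multiset.exists_cons_of_mem hp
  rw [Multiset.prod_cons] at hf hf0
  exact homog_of_mul_homog hinj hzd (hl p hp).homog
    (homog_multiset_prod fun q hq => (hl q (Multiset.mem_cons_of_mem hq)).homog) hf hf0

/-! ### Primitive elements and descent of factoriality -/

/-- No prime of the grading `𝒜` divides `f`. -/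
def Primitive (𝒜 : G → AddSubgroup R) (f : R) : Prop := ∀ p, KPrime 𝒜 p → ¬ p ∣ f

/-- Splitting off the fine primes dividing `f` terminates because the component of `f` of largest
`ψ`-degree has only finitely many prime factors. -/
theorem exists_primitive_aux (hinj : ∀ a b, φ a = φ b → ψ a = ψ b → a = b)
    (hzd : NoHomogZeroDivisors 𝒜) (n : ℕ) :
    ∀ (l : Multiset R) (f : R) (i j : G), l.card = n → (∀ p ∈ l, KPrime 𝒜 p) →
      Extremal φ ψ 𝒜 f i j → hcomp 𝒜 f j ∣ l.prod →
      ∃ c f', Homog 𝒜 c ∧ c ≠ 0 ∧ Homog (coarseAlong φ 𝒜) f' ∧ Primitive 𝒜 f' ∧ f = c * f' := by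
  let _ := coarseGradedRing φ 𝒜
  induction n with
  | zero =>
    intro l f i j hcard hl hf hd
    rw [Multiset.card_eq_zero] at hcard
    subst hcard
    refine ⟨1, f, homog_one, ?_, hf.homog, fun p hp hpf => ?_, (one_mul f).symm⟩
    · intro h1
      apply hf.ne_zero
      rw [← one_mul f, h1, zero_mul]
    · exact hp.2.1 (isUnit_of_dvd_one ((hp.homog.dvd_hcomp hpf j).trans hd))
  | succ n ih =>
    intro l f i j hcard hl hf hd
    by_cases hprim : Primitive 𝒜 f
    · refine ⟨1, f, homog_one, ?_, hf.homog, hprim, (one_mul f).symm⟩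
      intro h1
      apply hf.ne_zero
      rw [← one_mul f, h1, zero_mul]
    · simp only [Primitive, not_forall, not_not] at hprim
      obtain ⟨p, hp, hpf⟩ := hprim
      obtain ⟨q, hq, hpq⟩ := hp.exists_dvd_of_dvd_prod (fun q hq => (hl q hq).homog)
        ((hp.homog.dvd_hcomp hpf j).trans hd)
      have hqp : q ∣ p := by
        have hqP := hl q hq
        obtain ⟨u, hu, hqu⟩ := hp.homog.exists_eq_mul hqP.homog hpq
        rcases hqP.2.2.2 p u hp.homog hu ⟨1, by rw [← hqu, mul_one]⟩ with h | ⟨w, hw⟩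
        · exact h
        · exfalso
          apply hp.2.1
          refine IsUnit.of_mul_eq_one w (homog_cancel hzd hqP.homog hqP.1 ?_)
          rw [mul_one]
          conv_rhs => rw [hqu, hw]
          ring
      obtain ⟨l, rfl⟩ := Multiset.exists_cons_of_mem hq
      obtain ⟨g, hg, rfl⟩ := hp.homog.coarse.exists_eq_mul hf.homog hpf
      obtain ⟨i', j', hg'⟩ := exists_extremal (ψ := ψ) hg (right_ne_zero_of_mul hf.ne_zero)
      obtain ⟨d, hpd⟩ := hp.homog
      have hgtop : hcomp 𝒜 g j' ∣ l.prod := by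
        have hpe : Extremal φ ψ 𝒜 p d d := by
          have h : hcomp 𝒜 p d ≠ 0 := by rw [hcomp_of_mem hpd]; exact hp.1
          refine ⟨h, h, fun l hl => ?_⟩
          rw [eq_of_hcomp_ne_zero hpd hl]
          exact ⟨rfl, le_rfl, le_rfl⟩
        have hext := hpe.mul hinj hzd hg'
        have hjj : j = d + j' := by
          have h1 := hext.2.2 j hf.2.1
          have h2 := hf.2.2 _ hext.2.1
          have h3 := hext.2.2 _ hext.2.1
          exact hinj _ _ (h1.1.trans h3.1.symm) (by lia)
        rw [hjj, hcomp_mul_of_mem hpd, add_sub_cancel_left, Multiset.prod_cons] at hd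
        obtain ⟨e, he⟩ := hd.trans (mul_dvd_mul_right hqp l.prod)
        exact ⟨e, homog_cancel hzd hp.homog hp.1 (by rw [he, mul_assoc])⟩
      obtain ⟨c, f', hc, hc0, hf', hprim, rfl⟩ := ih l g i' j'
        (by simpa using hcard) (fun p hp => hl p (Multiset.mem_cons_of_mem hp)) hg' hgtop
      exact ⟨p * c, f', hp.homog.mul hc, hzd p c hp.homog hc hp.1 hc0, hf', hprim,
        (mul_assoc _ _ _).symm⟩

theorem exists_primitive (hinj : ∀ a b, φ a = φ b → ψ a = ψ b → a = b)
    (hzd : NoHomogZeroDivisors 𝒜) (hfac : FactoriallyGraded 𝒜) {f : R}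
    (hf : Homog (coarseAlong φ 𝒜) f) (hf0 : f ≠ 0) :
    ∃ c f', Homog 𝒜 c ∧ c ≠ 0 ∧ Homog (coarseAlong φ 𝒜) f' ∧ Primitive 𝒜 f' ∧ f = c * f' := by
  obtain ⟨i, j, hext⟩ := exists_extremal (ψ := ψ) hf hf0
  rcases hfac.primeProd (homog_hcomp f j) hext.2.1 with hu | ⟨l, hl, hprod⟩
  · exact exists_primitive_aux hinj hzd 0 0 f i j rfl (by simp) hext hu.dvd
  · exact exists_primitive_aux hinj hzd _ l f i j rfl hl hext (by rw [hprod])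

/-- Gauss's lemma: nonzero finely homogeneous factors can be cancelled from a multiple of a
primitive element. -/
theorem Primitive.dvd_of_dvd_mul (hinj : ∀ a b, φ a = φ b → ψ a = ψ b → a = b)
    (hzd : NoHomogZeroDivisors 𝒜) (hfac : FactoriallyGraded 𝒜) {f s x : R}
    (hf : Homog (coarseAlong φ 𝒜) f) (hprim : Primitive 𝒜 f) (hs : Homog 𝒜 s) (hs0 : s ≠ 0)
    (hx : Homog (coarseAlong φ 𝒜) x) (h : f ∣ s * x) : f ∣ x := by
  let _ := coarseGradedRing φ 𝒜
  rcases hfac.primeProd hs hs0 with hu | ⟨l, hl, rfl⟩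
  · exact (hu.dvd_mul_left).1 h
  · exact dvd_of_dvd_prod_mul (coarse_noHomogZeroDivisors hinj hzd) hf hx
      (fun p hp => (hl p hp).coarse hinj) (fun p hp => hprim p (hl p hp)) h

/-- Pseudo-division: eliminating the components of largest `ψ`-degree of `a` and of a
coarsely homogeneous `d` whose width is at most that of `a` leaves an element that vanishes or is
coarsely homogeneous of smaller width than `a`. -/
theorem pseudo_division (hinj : ∀ a b, φ a = φ b → ψ a = ψ b → a = b) {a d : R} {n n' : ℕ}
    (ha : HasWidth φ ψ 𝒜 n' a) (hd : HasWidth φ ψ 𝒜 n d) (hle : n ≤ n') :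
    ∃ s t, Homog 𝒜 s ∧ s ≠ 0 ∧
      (s * a - t * d = 0 ∨ ∃ n'' < n', HasWidth φ ψ 𝒜 n'' (s * a - t * d)) := by
  obtain ⟨i, j, ha, hn'⟩ := ha
  obtain ⟨i', j', hd, hn⟩ := hd
  refine ⟨hcomp 𝒜 d j', hcomp 𝒜 a j, homog_hcomp _ _, hd.2.1, ?_⟩
  set r := hcomp 𝒜 d j' * a - hcomp 𝒜 a j * d with hr
  have hrc : ∀ l, hcomp 𝒜 r l =
      hcomp 𝒜 d j' * hcomp 𝒜 a (l - j') - hcomp 𝒜 a j * hcomp 𝒜 d (l - j) := by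
    intro l
    rw [hr, hcomp_sub, hcomp_mul_of_mem (hcomp_mem d j'), hcomp_mul_of_mem (hcomp_mem a j)]
  have hj := ha.2.2 j ha.2.1
  have hj' := hd.2.2 j' hd.2.1
  have hband : ∀ l, hcomp 𝒜 r l ≠ 0 →
      φ l = φ i + φ i' ∧ ψ i + ψ j' ≤ ψ l ∧ ψ l < ψ j + ψ j' := by
    intro l hl
    have hweak : φ l = φ i + φ i' ∧ ψ i + ψ j' ≤ ψ l ∧ ψ l ≤ ψ j + ψ j' := by
      by_cases h1 : hcomp 𝒜 a (l - j') = 0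
      · have h2 : hcomp 𝒜 d (l - j) ≠ 0 := by
          intro h2
          apply hl
          rw [hrc, h1, h2, mul_zero, mul_zero, sub_zero]
        have h3 := hd.2.2 _ h2
        simp only [map_sub] at h3
        refine ⟨?_, by lia, by lia⟩
        rw [← hj.1, ← h3.1]
        abel
      · have h3 := ha.2.2 _ h1
        simp only [map_sub] at h3
        refine ⟨?_, by lia, by lia⟩
        rw [← hj'.1, ← h3.1]
        abel
    refine ⟨hweak.1, hweak.2.1, lt_of_le_of_ne hweak.2.2 fun htop => hl ?_⟩
    have hlj : l = j + j' :=
      hinj _ _ (by rw [hweak.1, map_add, hj.1, hj'.1]) (by rw [htop, map_add])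
    rw [hrc, hlj, add_sub_cancel_right, add_sub_cancel_left, mul_comm, sub_self]
  by_cases hr0 : r = 0
  · exact Or.inl hr0
  · refine Or.inr ?_
    have hrh : Homog (coarseAlong φ 𝒜) r :=
      ⟨φ i + φ i', mem_coarseAlong_iff.2 fun l hl => (hband l hl).1⟩
    obtain ⟨m, b, t, hbt, hm⟩ := exists_hasWidth (ψ := ψ) hrh hr0
    have h1 := hband b hbt.1
    have h2 := hband t hbt.2.1
    exact ⟨m, by lia, b, t, hbt, hm⟩

/-- A coarsely homogeneous element of minimal width in an ideal divides every coarsely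
homogeneous element of that ideal up to a nonzero finely homogeneous factor. -/
theorem exists_dvd_mul_of_minimal (hinj : ∀ a b, φ a = φ b → ψ a = ψ b → a = b)
    (hzd : NoHomogZeroDivisors 𝒜) {I : Ideal R} {d : R} {n : ℕ} (hd : HasWidth φ ψ 𝒜 n d)
    (hdI : d ∈ I) (hmin : ∀ a ∈ I, ∀ k, HasWidth φ ψ 𝒜 k a → n ≤ k) (k : ℕ) :
    ∀ a ∈ I, HasWidth φ ψ 𝒜 k a → ∃ s, Homog 𝒜 s ∧ s ≠ 0 ∧ d ∣ s * a := by
  induction k using Nat.strong_induction_on with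
  | _ k ih =>
    intro a haI ha
    obtain ⟨s, t, hs, hs0, hr⟩ := pseudo_division hinj ha hd (hmin a haI k ha)
    rcases hr with hr | ⟨k', hk', hr⟩
    · exact ⟨s, hs, hs0, t, by rw [sub_eq_zero.1 hr, mul_comm]⟩
    · obtain ⟨s', hs', hs'0, e, he⟩ := ih k' hk' _
        (I.sub_mem (I.mul_mem_left s haI) (I.mul_mem_left t hdI)) hr
      refine ⟨s' * s, hs'.mul hs, hzd _ _ hs' hs hs'0 hs0, e + s' * t, ?_⟩
      rw [mul_add, ← he]
      ring

/-- A primitive irreducible element is prime for the coarse grading: the primitive part `d'` of an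
element of minimal width in the ideal `(f, g)` is a common divisor of `f` and `g`. -/
theorem Primitive.kPrime_of_kIrreducible (hinj : ∀ a b, φ a = φ b → ψ a = ψ b → a = b)
    (hzd : NoHomogZeroDivisors 𝒜) (hfac : FactoriallyGraded 𝒜) {f : R}
    (hprim : Primitive 𝒜 f) (hf : KIrreducible (coarseAlong φ 𝒜) f) :
    KPrime (coarseAlong φ 𝒜) f := by
  let _ := coarseGradedRing φ 𝒜
  obtain ⟨hf0, hfu, hfh, hirr⟩ := hf
  refine ⟨hf0, hfu, hfh, fun g h hg hh hdvd => ?_⟩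
  by_cases hg0 : g = 0
  · exact Or.inl (hg0 ▸ dvd_zero f)
  obtain ⟨nf, hnf⟩ := exists_hasWidth (ψ := ψ) hfh hf0
  obtain ⟨ng, hng⟩ := exists_hasWidth (ψ := ψ) hg hg0
  have hfI : f ∈ Ideal.span {f, g} := Ideal.subset_span (by simp)
  have hgI : g ∈ Ideal.span {f, g} := Ideal.subset_span (by simp)
  classical
  have hex : ∃ n, ∃ d ∈ Ideal.span {f, g}, HasWidth φ ψ 𝒜 n d := ⟨nf, f, hfI, hnf⟩
  obtain ⟨d, hdI, hd⟩ := Nat.find_spec hex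
  have hmin : ∀ a ∈ Ideal.span {f, g}, ∀ k, HasWidth φ ψ 𝒜 k a → Nat.find hex ≤ k :=
    fun a ha k hk => Nat.find_min' hex ⟨a, ha, hk⟩
  obtain ⟨s, hs, hs0, hds⟩ := exists_dvd_mul_of_minimal hinj hzd hd hdI hmin nf f hfI hnf
  obtain ⟨t, ht, ht0, hdt⟩ := exists_dvd_mul_of_minimal hinj hzd hd hdI hmin ng g hgI hng
  obtain ⟨c, d', hc, hc0, hd'h, hd'prim, hcd⟩ :=
    exists_primitive hinj hzd hfac hd.homog hd.ne_zero
  have hd'd : d' ∣ d := ⟨c, by rw [hcd, mul_comm]⟩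
  have hd'f : d' ∣ f := hd'prim.dvd_of_dvd_mul hinj hzd hfac hd'h hs hs0 hfh (hd'd.trans hds)
  have hdvd_g : d' ∣ g := hd'prim.dvd_of_dvd_mul hinj hzd hfac hd'h ht ht0 hg (hd'd.trans hdt)
  obtain ⟨e, he, hfe⟩ := hd'h.exists_eq_mul hfh hd'f
  rcases hirr d' e hd'h he hfe with hu | hu
  · right
    obtain ⟨x, y, hxy⟩ := Ideal.mem_span_pair.1 hdI
    have h1 : f ∣ d * h := by
      rw [← hxy, add_mul, mul_assoc y]
      exact dvd_add ⟨x * h, by ring⟩ (hdvd.mul_left y)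
    have h2 : f ∣ d' * (c * h) := by
      rwa [hcd, mul_comm c, mul_assoc] at h1
    exact hprim.dvd_of_dvd_mul hinj hzd hfac hfh hc hc0 hh ((hu.dvd_mul_left).1 h2)
  · left
    rw [hfe, hu.mul_right_dvd]
    exact hdvd_g

/-- A factorization of a primitive element into non-units has factors of positive width, so
factorization into irreducibles terminates. -/
theorem Primitive.primeProd (hinj : ∀ a b, φ a = φ b → ψ a = ψ b → a = b)
    (hzd : NoHomogZeroDivisors 𝒜) (hfac : FactoriallyGraded 𝒜) (n : ℕ) :
    ∀ f, HasWidth φ ψ 𝒜 n f → Primitive 𝒜 f → PrimeProd (coarseAlong φ 𝒜) f := by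
  let _ := coarseGradedRing φ 𝒜
  induction n using Nat.strong_induction_on with
  | _ n ih =>
    intro f hn hprim
    by_cases hfu : IsUnit f
    · exact Or.inl hfu
    by_cases hirr : KIrreducible (coarseAlong φ 𝒜) f
    · exact Or.inr ⟨{f}, by simpa using hprim.kPrime_of_kIrreducible hinj hzd hfac hirr, by simp⟩
    · have : ∃ g h, Homog (coarseAlong φ 𝒜) g ∧ Homog (coarseAlong φ 𝒜) h ∧ f = g * h ∧
          ¬ IsUnit g ∧ ¬ IsUnit h := by
        by_contra! hc
        refine hirr ⟨hn.ne_zero, hfu, hn.homog, fun g h hg hh hfgh => ?_⟩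
        by_contra! hu
        exact hu.2 (hc g h hg hh hfgh hu.1)
      obtain ⟨g, h, hg, hh, rfl, hgu, hhu⟩ := this
      have hgp : Primitive 𝒜 g := fun p hp hpg => hprim p hp (hpg.mul_right h)
      have hhp : Primitive 𝒜 h := fun p hp hph => hprim p hp (hph.mul_left g)
      have hpos : ∀ k x, HasWidth φ ψ 𝒜 k x → Primitive 𝒜 x → ¬ IsUnit x → 0 < k := by
        intro k x hk hx hxu
        rw [Nat.pos_iff_ne_zero]
        rintro rfl
        obtain ⟨l, hl, rfl⟩ := hfac x (hk.homog_of_zero hinj) hk.ne_zero hxu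
        induction l using Multiset.induction_on with
        | empty => exact hxu (by simp)
        | cons p l _ =>
          exact hx p (hl p (Multiset.mem_cons_self p l)) (by simp)
      obtain ⟨k, hk⟩ := exists_hasWidth (ψ := ψ) hg (left_ne_zero_of_mul hn.ne_zero)
      obtain ⟨k', hk'⟩ := exists_hasWidth (ψ := ψ) hh (right_ne_zero_of_mul hn.ne_zero)
      have hsum := (hk.mul hinj hzd hk').unique hn
      have h1 := hpos k g hk hgp hgu
      have h2 := hpos k' h hk' hhp hhu
      exact (ih k (by lia) g hk hgp).mul hg hh (ih k' (by lia) h hk' hhp)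

theorem FactoriallyGraded.coarse (hinj : ∀ a b, φ a = φ b → ψ a = ψ b → a = b)
    (hzd : NoHomogZeroDivisors 𝒜) (hfac : FactoriallyGraded 𝒜) :
    FactoriallyGraded (coarseAlong φ 𝒜) := by
  let _ := coarseGradedRing φ 𝒜
  intro f hf hf0 hfu
  obtain ⟨c, f', hc, hc0, hf', hprim, rfl⟩ := exists_primitive hinj hzd hfac hf hf0
  obtain ⟨n, hn⟩ := exists_hasWidth (ψ := ψ) hf' (right_ne_zero_of_mul hf0)
  have hcp : PrimeProd (coarseAlong φ 𝒜) c := by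
    rcases hfac.primeProd hc hc0 with hu | ⟨l, hl, hprod⟩
    · exact Or.inl hu
    · exact Or.inr ⟨l, fun p hp => (hl p hp).coarse hinj, hprod⟩
  exact (hcp.mul hc.coarse hf' (hprim.primeProd hinj hzd hfac n f' hn)).resolve_left hfu

end Step

/-! ### Coarsening `ℤᵐ` one coordinate at a time -/

section Induction

variable {K R : Type*} [AddCommGroup K] [DecidableEq K] [CommRing R]

/-- The homomorphism `K ⊕ ℤ^(m+1) → K ⊕ ℤᵐ` forgetting the first integer coordinate. -/
def forgetHead (K : Type*) [AddCommGroup K] (m : ℕ) :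
    K × (Fin (m + 1) → ℤ) →+ K × (Fin m → ℤ) where
  toFun x := (x.1, Fin.tail x.2)
  map_zero' := rfl
  map_add' _ _ := rfl

/-- The first integer coordinate `K ⊕ ℤ^(m+1) → ℤ`. -/
def headCoord (K : Type*) [AddCommGroup K] (m : ℕ) : K × (Fin (m + 1) → ℤ) →+ ℤ where
  toFun x := x.2 0
  map_zero' := rfl
  map_add' _ _ := rfl

theorem forgetHead_headCoord_injective (m : ℕ) (a b : K × (Fin (m + 1) → ℤ))
    (h : forgetHead K m a = forgetHead K m b) (h' : headCoord K m a = headCoord K m b) :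
    a = b := by
  have h1 : (forgetHead K m a).1 = (forgetHead K m b).1 := by rw [h]
  have h2 : Fin.tail a.2 = Fin.tail b.2 := by
    change (forgetHead K m a).2 = (forgetHead K m b).2
    rw [h]
  refine Prod.ext h1 ?_
  rw [← Fin.cons_self_tail a.2, ← Fin.cons_self_tail b.2, h2]
  exact congrArg (fun z => (Fin.cons z (Fin.tail b.2) : Fin (m + 1) → ℤ)) h'

theorem coarsen_coarseAlong (m : ℕ) (𝒜 : K × (Fin (m + 1) → ℤ) → AddSubgroup R) :
    coarsen (coarseAlong (forgetHead K m) 𝒜) = coarsen 𝒜 := by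
  funext w
  apply le_antisymm
  · refine iSup_le fun v => coarseAlong_le fun g hg => ?_
    have h1 : g.1 = w := congrArg Prod.fst hg
    subst h1
    exact le_iSup (fun v => 𝒜 (g.1, v)) g.2
  · refine iSup_le fun v => le_trans ?_
      (le_iSup (fun v => coarseAlong (forgetHead K m) 𝒜 (w, v)) (Fin.tail v))
    exact fun x hx => mem_coarseAlong_of_mem hx rfl

/-- Induction on `m`, each step coarsening along `forgetHead` and separating the fibres by
`headCoord`. -/
theorem coarsen_main (m : ℕ) : ∀ (𝒜 : K × (Fin m → ℤ) → AddSubgroup R) [GradedRing 𝒜],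
    NoHomogZeroDivisors 𝒜 → (FactoriallyGraded 𝒜 ↔ FactoriallyGraded (coarsen 𝒜)) ∧
      ∀ p, KPrime 𝒜 p → KPrime (coarsen 𝒜) p := by
  induction m with
  | zero =>
    intro 𝒜 _ _
    have hH : Homog (coarsen 𝒜) = Homog 𝒜 := by
      have hc : ∀ w, coarsen 𝒜 w = 𝒜 (w, default) := fun w =>
        (iSup_unique fun v => 𝒜 (w, v)).trans
          (congrArg (fun v => 𝒜 (w, v)) (Subsingleton.elim _ _))
      funext x
      apply propext
      constructor
      · rintro ⟨w, hw⟩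
        exact ⟨_, hc w ▸ hw⟩
      · rintro ⟨⟨w, v⟩, hw⟩
        refine ⟨w, ?_⟩
        rw [hc]
        rwa [Subsingleton.elim v default] at hw
    have hP : KPrime (coarsen 𝒜) = KPrime 𝒜 := by
      funext x
      simp only [KPrime, hH]
    refine ⟨?_, fun p hp => hP ▸ hp⟩
    simp only [FactoriallyGraded, hH, hP]
  | succ m ih =>
    intro 𝒜 _ hzd
    have hinj := forgetHead_headCoord_injective (K := K) m
    let _ := coarseGradedRing (forgetHead K m) 𝒜
    have key := ih (coarseAlong (forgetHead K m) 𝒜) (coarse_noHomogZeroDivisors hinj hzd)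
    rw [coarsen_coarseAlong] at key
    refine ⟨Iff.trans ⟨fun h => h.coarse hinj hzd, fun h => h.of_coarse hinj hzd⟩ key.1,
      fun p hp => key.2 p (hp.coarse hinj)⟩

end Induction

/-- Theorem 1.4. Let `R` be `K ⊕ ℤᵐ`-graded (m ≥ 1) without homogeneous
zero divisors and `K`-noetherian for the coarsened `K`-grading. Then `R` is factorially
`K ⊕ ℤᵐ`-graded iff it is factorially `K`-graded; moreover, in this case any decomposition
of a `K ⊕ ℤᵐ`-homogeneous element into `K ⊕ ℤᵐ`-prime factors is also a decomposition into
`K`-prime factors. -/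
theorem statement_4 {K R : Type*} [AddCommGroup K] [DecidableEq K] [CommRing R]
    {m : ℕ} (hm : 0 < m)
    (𝒜 : K × (Fin m → ℤ) → AddSubgroup R) [GradedRing 𝒜]
    (hzd : NoHomogZeroDivisors 𝒜)
    (hnoeth : KNoetherian (coarsen 𝒜)) :
    (FactoriallyGraded 𝒜 ↔ FactoriallyGraded (coarsen 𝒜)) ∧
    (FactoriallyGraded 𝒜 →
      ∀ f : R, Homog 𝒜 f →
        ∀ l : Multiset R, (∀ p ∈ l, KPrime 𝒜 p) → l.prod = f →
          ∀ p ∈ l, KPrime (coarsen 𝒜) p) := by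
  obtain ⟨h1, h2⟩ := coarsen_main m 𝒜 hzd
  exact ⟨h1, fun _ _ _ l hl _ p hp => h2 p (hl p hp)⟩
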